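/- Let b > τ > 0 and α ≠ 0 be real numbers, and fix σ ∈ {1, −1}. For λ > 0 define the complex polynomial P_λ(s) = (s² + λ)·(τ s³ + s² + b λ s + λ) − α²·(1 + τ s). Then there exist constants C > 0 and Λ > 0 such that for every λ ≥ Λ there exists s ∈ ℂ with P_λ(s) = 0 and |s − (σ i √λ − α²/(2(b−τ)λ²) − σ i α² τ/(2(b−τ)λ^{3/2}))| ≤ C·λ^{−5/2}. -/

import Mathlib

/-!
Put `ω = σ i √λ`, so that `λ = -ω ^ 2`. The modal polynomial takes the value `-α ^ 2 (1 + τ ω)` at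
`ω`, with derivative `-2 (b - τ) ω ^ 4 + O(1)`, so the two correction terms are the leading part
`d = -α ^ 2 (1 + τ ω) / (2 (b - τ) ω ^ 4)` of one Newton step from `ω`. At `z = ω + d` the
polynomial is `O(ω ^ (-3))` and its derivative is still of exact order `ω ^ 4`. Since `p' / p` is
the sum of `1 / (z - r)` over the roots `r`, a root lies within `deg p * |p z / p' z| = O(ω ^ (-7))`
of `z`. The calculations are in the variable `x = ω⁻¹`, in which every error term is a polynomial.
-/

open Filter Topology Asymptotics Polynomial

lemma exists_isRoot_norm_sub_le_natDegree_mul {K : Type*} [NormedField K] {p : K[X]} (hp : p.Splits)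
    {z : K} (hz : p.derivative.eval z ≠ 0) :
    ∃ r, p.IsRoot r ∧ ‖r - z‖ ≤ p.natDegree * ‖p.eval z / p.derivative.eval z‖ := by
  by_cases hpz : p.eval z = 0
  · exact ⟨z, hpz, by simp [hpz]⟩
  have hsum := hp.eval_derivative_div_eval_of_ne_zero hpz
  have hroots : p.roots ≠ 0 := by
    intro h
    simp [h, hz, hpz] at hsum
  obtain ⟨r, hr, hmax⟩ := Multiset.exists_max_image (fun r => ‖1 / (z - r)‖) hroots
  have hroot : p.IsRoot r := isRoot_of_mem_roots hr
  have hrz : 0 < ‖r - z‖ := norm_pos_iff.2 (sub_ne_zero.2 fun h => hpz (h ▸ hroot))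
  refine ⟨r, hroot, ?_⟩
  have hle : ‖p.derivative.eval z / p.eval z‖ ≤ p.natDegree / ‖r - z‖ :=
    calc ‖p.derivative.eval z / p.eval z‖
        ≤ ((p.roots.map fun r => 1 / (z - r)).map norm).sum := by
          rw [hsum]
          exact norm_multiset_sum_le _
      _ ≤ p.roots.card • ‖1 / (z - r)‖ := by
          rw [Multiset.map_map, ← Multiset.card_map (norm ∘ fun r => 1 / (z - r))]
          exact Multiset.sum_le_card_nsmul _ _ (Multiset.forall_mem_map_iff.2 hmax)
      _ ≤ p.natDegree / ‖r - z‖ := by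
          rw [nsmul_eq_mul, norm_div, norm_one, norm_sub_rev, mul_one_div]
          gcongr
          exact p.card_roots'
  rw [← inv_div, norm_inv, ← div_eq_mul_inv]
  have : 0 < ‖p.derivative.eval z / p.eval z‖ := norm_pos_iff.2 (div_ne_zero hz hpz)
  rwa [le_div_comm₀ hrz this]

/-- The characteristic polynomial `τ s³ + s² + b λ s + λ` of the uncoupled MGT equation on the
eigenspace with eigenvalue `lam`. -/
noncomputable def mgtPoly (τ b lam : ℂ) : ℂ[X] :=
  C τ * X ^ 3 + X ^ 2 + C (b * lam) * X + C lam

/-- The characteristic polynomial `P_λ` of the coupled wave–MGT system on the eigenspace with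
eigenvalue `lam`. -/
noncomputable def modalPoly (τ b α lam : ℂ) : ℂ[X] :=
  (X ^ 2 + C lam) * mgtPoly τ b lam - C (α ^ 2) * (1 + C τ * X)

/-- The coefficient `e` for which `x⁻¹ + x³ e` is the approximate wave-branch root, where `x⁻¹` is
the uncoupled root `σ i √λ`. -/
noncomputable def waveCorrection (τ b α x : ℂ) : ℂ := -(α ^ 2 * (x + τ)) / (2 * (b - τ))

/-- The approximate wave-branch root, as a function of the inverse `x` of the uncoupled root. -/
noncomputable def waveApprox (τ b α x : ℂ) : ℂ := x⁻¹ + x ^ 3 * waveCorrection τ b α x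

section

variable (τ b α : ℂ)

lemma natDegree_modalPoly_le (lam : ℂ) : (modalPoly τ b α lam).natDegree ≤ 5 := by
  unfold modalPoly mgtPoly
  compute_degree

lemma eval_modalPoly (lam s : ℂ) :
    (modalPoly τ b α lam).eval s =
      (s ^ 2 + lam) * (mgtPoly τ b lam).eval s - α ^ 2 * (1 + τ * s) := by
  simp [modalPoly]

lemma eval_derivative_modalPoly (lam s : ℂ) :
    (modalPoly τ b α lam).derivative.eval s =
      2 * s * (mgtPoly τ b lam).eval s
        + (s ^ 2 + lam) * (mgtPoly τ b lam).derivative.eval s - α ^ 2 * τ := by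
  simp only [modalPoly, derivative_sub, derivative_add, derivative_mul, derivative_X_pow,
    derivative_X, derivative_C, derivative_one, eval_sub, eval_add, eval_mul, eval_pow, eval_C,
    eval_X, eval_one, eval_zero, Nat.cast_ofNat]
  ring

end

/-- The quotient `R` in `Q (x⁻¹ + x³ e) = (τ - b + x⁴ e R) / x³`, where `Q` is the MGT polynomial
at `λ = -x⁻²`. -/
def mgtRemainder (τ b x e : ℂ) : ℂ :=
  3 * τ - b + 2 * x + (3 * τ + x) * x ^ 4 * e + τ * x ^ 8 * e ^ 2

/-- The value of `x⁻³ P` at `x⁻¹ + x³ e`, where `P` is the modal polynomial at `λ = -x⁻²`, for the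
`e` that cancels its leading terms, namely `waveCorrection`. -/
def modalResidual (τ b α x e : ℂ) : ℂ :=
  e ^ 2 * ((2 + x ^ 4 * e) * mgtRemainder τ b x e + τ - b) - α ^ 2 * τ * e

/-- The value of `x⁴ P'` at `x⁻¹ + x³ e`, where `P` is the modal polynomial at `λ = -x⁻²`. -/
def modalSlope (τ b α x e : ℂ) : ℂ :=
  2 * (1 + x ^ 4 * e) * (τ - b + x ^ 4 * e * mgtRemainder τ b x e)
    + x ^ 4 * e * (2 + x ^ 4 * e) *
      (3 * τ * (1 + x ^ 4 * e) ^ 2 + 2 * x * (1 + x ^ 4 * e) - b)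
    - α ^ 2 * τ * x ^ 4

section

variable {x : ℂ}

lemma eval_mgtPoly_inv_add (τ b : ℂ) (hx : x ≠ 0) (e : ℂ) :
    (mgtPoly τ b (-x⁻¹ ^ 2)).eval (x⁻¹ + x ^ 3 * e) =
      (τ - b + x ^ 4 * e * mgtRemainder τ b x e) / x ^ 3 := by
  simp only [mgtPoly, mgtRemainder, eval_add, eval_mul, eval_C, eval_pow, eval_X]
  field_simp
  ring

lemma eval_derivative_mgtPoly_inv_add (τ b : ℂ) (hx : x ≠ 0) (e : ℂ) :
    (mgtPoly τ b (-x⁻¹ ^ 2)).derivative.eval (x⁻¹ + x ^ 3 * e) =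
      (3 * τ * (1 + x ^ 4 * e) ^ 2 + 2 * x * (1 + x ^ 4 * e) - b) / x ^ 2 := by
  simp only [mgtPoly, derivative_add, derivative_mul, derivative_X_pow, derivative_X, derivative_C,
    eval_add, eval_mul, eval_pow, eval_C, eval_X, eval_one, eval_zero, Nat.cast_ofNat,
    Nat.reduceSub]
  field_simp
  ring

lemma eval_modalPoly_waveApprox {τ b : ℂ} (hb : b ≠ τ) (α : ℂ) (hx : x ≠ 0) :
    (modalPoly τ b α (-x⁻¹ ^ 2)).eval (waveApprox τ b α x) =
      x ^ 3 * modalResidual τ b α x (waveCorrection τ b α x) := by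
  have hcancel : 2 * (b - τ) * waveCorrection τ b α x = -(α ^ 2 * (x + τ)) :=
    mul_div_cancel₀ _ (mul_ne_zero two_ne_zero (sub_ne_zero.2 hb))
  rw [eval_modalPoly, waveApprox, eval_mgtPoly_inv_add τ b hx, modalResidual]
  generalize mgtRemainder τ b x _ = R
  generalize waveCorrection τ b α x = e at hcancel ⊢
  field_simp
  linear_combination -x ^ 4 * hcancel

lemma pow_mul_eval_derivative_modalPoly_inv_add (τ b α : ℂ) (hx : x ≠ 0) (e : ℂ) :
    x ^ 4 * (modalPoly τ b α (-x⁻¹ ^ 2)).derivative.eval (x⁻¹ + x ^ 3 * e) =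
      modalSlope τ b α x e := by
  rw [eval_derivative_modalPoly, eval_mgtPoly_inv_add τ b hx,
    eval_derivative_mgtPoly_inv_add τ b hx, modalSlope]
  generalize mgtRemainder τ b x e = R
  field_simp
  ring

end

lemma eval_modalPoly_waveApprox_isBigO {τ b : ℂ} (hb : b ≠ τ) (α : ℂ) :
    (fun x => (modalPoly τ b α (-x⁻¹ ^ 2)).eval (waveApprox τ b α x)) =O[𝓝[≠] 0]
      fun x => x ^ 3 := by
  have hcont : Continuous fun x => modalResidual τ b α x (waveCorrection τ b α x) := by
    unfold modalResidual mgtRemainder waveCorrection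
    fun_prop
  have hbdd := ((hcont.tendsto 0).isBigO_one ℂ).mono (nhdsWithin_le_nhds (s := {0}ᶜ))
  refine ((isBigO_refl (fun x : ℂ => x ^ 3) _).mul hbdd).congr' ?_ (by simp)
  filter_upwards [self_mem_nhdsWithin] with x hx
  exact (eval_modalPoly_waveApprox hb α hx).symm

lemma tendsto_pow_mul_eval_derivative_modalPoly_waveApprox (τ b α : ℂ) :
    Tendsto (fun x => x ^ 4 * (modalPoly τ b α (-x⁻¹ ^ 2)).derivative.eval (waveApprox τ b α x))
      (𝓝[≠] 0) (𝓝 (2 * (τ - b))) := by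
  have hcont : Continuous fun x => modalSlope τ b α x (waveCorrection τ b α x) := by
    unfold modalSlope mgtRemainder waveCorrection
    fun_prop
  have hlim := hcont.tendsto' 0 (2 * (τ - b)) (by simp [modalSlope])
  refine (hlim.mono_left nhdsWithin_le_nhds).congr' ?_
  filter_upwards [self_mem_nhdsWithin] with x hx
  exact (pow_mul_eval_derivative_modalPoly_inv_add τ b α hx _).symm

lemma newtonStep_modalPoly_waveApprox_isBigO {τ b : ℂ} (hb : b ≠ τ) (α : ℂ) :
    (fun x => (modalPoly τ b α (-x⁻¹ ^ 2)).eval (waveApprox τ b α x) /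
        (modalPoly τ b α (-x⁻¹ ^ 2)).derivative.eval (waveApprox τ b α x)) =O[𝓝[≠] 0]
      fun x => x ^ 7 := by
  have hlim : 2 * (τ - b) ≠ 0 := mul_ne_zero two_ne_zero (sub_ne_zero.2 hb.symm)
  have hinv := ((tendsto_pow_mul_eval_derivative_modalPoly_waveApprox τ b α).inv₀ hlim).isBigO_one ℂ
  refine (((eval_modalPoly_waveApprox_isBigO hb α).mul
    (isBigO_refl (fun x : ℂ => x ^ 4) _)).mul hinv).congr' ?_ (.of_forall fun x => by ring)
  filter_upwards [self_mem_nhdsWithin] with x (hx : x ≠ 0)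
  field_simp

lemma exists_isRoot_modalPoly_near_waveApprox {τ b : ℂ} (hb : b ≠ τ) (α : ℂ) :
    ∃ C > 0, ∀ᶠ x in 𝓝[≠] 0, ∃ s, (modalPoly τ b α (-x⁻¹ ^ 2)).IsRoot s ∧
      ‖s - waveApprox τ b α x‖ ≤ C * ‖x‖ ^ 7 := by
  obtain ⟨M, hM, hstep⟩ := (newtonStep_modalPoly_waveApprox_isBigO hb α).exists_pos
  have hlim : 2 * (τ - b) ≠ 0 := mul_ne_zero two_ne_zero (sub_ne_zero.2 hb.symm)
  have hderiv := (tendsto_pow_mul_eval_derivative_modalPoly_waveApprox τ b α).eventually_ne hlim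
  refine ⟨5 * M, by positivity, ?_⟩
  filter_upwards [hstep.bound, hderiv] with x hx hx'
  obtain ⟨s, hs, hle⟩ := exists_isRoot_norm_sub_le_natDegree_mul
    (IsAlgClosed.splits (modalPoly τ b α (-x⁻¹ ^ 2))) (right_ne_zero_of_mul hx')
  refine ⟨s, hs, hle.trans ?_⟩
  rw [norm_pow] at hx
  rw [mul_assoc]
  gcongr
  exact_mod_cast natDegree_modalPoly_le τ b α _

lemma tendsto_inv_mul_sqrt_atTop {J : ℂ} (hJ : J ≠ 0) :
    Tendsto (fun lam : ℝ => (J * (√lam : ℂ))⁻¹) atTop (𝓝[≠] 0) := by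
  have hsqrt : Tendsto (fun lam : ℝ => (√lam : ℂ)) atTop (Bornology.cobounded ℂ) :=
    (RCLike.tendsto_ofReal_atTop_cobounded ℂ).comp Real.tendsto_sqrt_atTop
  exact tendsto_inv₀_cobounded'.comp ((tendsto_mul_left_cobounded hJ).comp hsqrt)

lemma waveApprox_inv_mul_sqrt (τ b α : ℂ) {J : ℂ} (hJ : J ^ 2 = -1) {lam : ℝ} (hlam : 0 ≤ lam) :
    waveApprox τ b α (J * (√lam : ℂ))⁻¹ =
      J * (√lam : ℂ) - α ^ 2 / (2 * (b - τ) * (lam : ℂ) ^ 2) -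
        J * (α ^ 2 * τ / (2 * (b - τ) * (lam ^ ((3 : ℝ) / 2) : ℝ))) := by
  have hpow : lam ^ ((3 : ℝ) / 2) = √lam ^ 3 := by
    rw [Real.sqrt_eq_rpow, ← Real.rpow_mul_natCast hlam]
    norm_num
  have hsq : (lam : ℂ) = (√lam : ℂ) ^ 2 := by
    exact_mod_cast (Real.sq_sqrt hlam).symm
  have hJinv : J⁻¹ = -J := inv_eq_of_mul_eq_one_right (by linear_combination -hJ)
  have hJ3 : J⁻¹ ^ 3 = J := by rw [hJinv]; linear_combination -J * hJ
  have hJ4 : J⁻¹ ^ 4 = 1 := by rw [hJinv]; linear_combination (J ^ 2 - 1) * hJ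
  rw [waveApprox, waveCorrection, hpow, hsq, inv_inv, Complex.ofReal_pow, mul_inv]
  generalize 2 * (b - τ) = D
  linear_combination -(α ^ 2 * τ) / D * (√lam : ℂ)⁻¹ ^ 3 * hJ3
    - α ^ 2 / D * (√lam : ℂ)⁻¹ ^ 4 * hJ4

theorem stmt_17_general (τ b α : ℂ) (hb : b ≠ τ) (σ : ℝ) (hσ : σ = 1 ∨ σ = -1) :
    ∃ C Λ : ℝ, 0 < C ∧ 1 ≤ Λ ∧ ∀ lam : ℝ, Λ ≤ lam →
      ∃ s : ℂ, (modalPoly τ b α lam).IsRoot s ∧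
        ‖s - (σ * Complex.I * (√lam : ℂ) - α ^ 2 / (2 * (b - τ) * (lam : ℂ) ^ 2) -
            σ * Complex.I *
              (α ^ 2 * τ / (2 * (b - τ) * (lam ^ ((3 : ℝ) / 2) : ℝ))))‖ ≤
          C * lam ^ (-(7 : ℝ) / 2) := by
  set J : ℂ := σ * Complex.I
  have hJ : J ^ 2 = -1 := by rcases hσ with rfl | rfl <;> simp [J]
  have hJnorm : ‖J‖ = 1 := by rcases hσ with rfl | rfl <;> simp [J]
  have hx := tendsto_inv_mul_sqrt_atTop (norm_ne_zero_iff.1 (hJnorm ▸ one_ne_zero))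
  obtain ⟨C, hC, hroot⟩ := exists_isRoot_modalPoly_near_waveApprox hb α
  obtain ⟨Λ, hΛ⟩ := ((hx.eventually hroot).and (eventually_ge_atTop 1)).exists_forall_of_atTop
  refine ⟨C, Λ, hC, (hΛ Λ le_rfl).2, fun lam hlam => ?_⟩
  obtain ⟨⟨s, hs, hle⟩, hlam1⟩ := hΛ lam hlam
  have hlam0 : 0 ≤ lam := zero_le_one.trans hlam1
  have hsq : -(J * (√lam : ℂ))⁻¹⁻¹ ^ 2 = lam := by
    rw [inv_inv, mul_pow, hJ, ← Complex.ofReal_pow, Real.sq_sqrt hlam0]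
    ring
  have hpow : ‖(J * (√lam : ℂ))⁻¹‖ ^ 7 = lam ^ (-(7 : ℝ) / 2) := by
    rw [norm_inv, norm_mul, hJnorm, one_mul, Complex.norm_of_nonneg (Real.sqrt_nonneg lam),
      Real.sqrt_eq_rpow, ← Real.rpow_neg hlam0, ← Real.rpow_mul_natCast hlam0]
    norm_num
  rw [hsq] at hs
  rw [waveApprox_inv_mul_sqrt τ b α hJ hlam0, hpow] at hle
  exact ⟨s, hs, hle⟩

/-- High-frequency expansion of the wave-branch characteristic roots: for b > τ > 0, α ≠ 0,
σ = ±1, there are C, Λ > 0 such that for every λ ≥ Λ the polynomial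
P_λ(s) = (s² + λ)(τs³ + s² + bλs + λ) − α²(1 + τs) has a root s with
|s − (σ i √λ − α²/(2(b−τ)λ²) − σ i α²τ/(2(b−τ)λ^{3/2}))| ≤ C λ^{−5/2}. -/
theorem stmt_17 (τ b α σ : ℝ) (hτ : 0 < τ) (hb : τ < b) (hα : α ≠ 0)
    (hσ : σ = 1 ∨ σ = -1) (P : ℝ → ℂ → ℂ)
    (hP : ∀ lam : ℝ, 0 < lam → ∀ s : ℂ, P lam s =
      (s ^ 2 + (lam : ℂ)) *
        ((τ : ℂ) * s ^ 3 + s ^ 2 + (b : ℂ) * (lam : ℂ) * s + (lam : ℂ)) -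
      (α : ℂ) ^ 2 * (1 + (τ : ℂ) * s)) :
    ∃ C Λ : ℝ, 0 < C ∧ 0 < Λ ∧ ∀ lam : ℝ, Λ ≤ lam →
      ∃ s : ℂ, P lam s = 0 ∧
        ‖s - ((σ : ℂ) * Complex.I * (Real.sqrt lam : ℂ) -
            ((α ^ 2 / (2 * (b - τ) * lam ^ 2) : ℝ) : ℂ) -
            (σ : ℂ) * Complex.I *
              ((α ^ 2 * τ / (2 * (b - τ) * lam ^ ((3 : ℝ) / 2)) : ℝ) : ℂ))‖ ≤
          C * lam ^ (-(5 : ℝ) / 2) := by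
  obtain ⟨C, Λ, hC, hΛ, hroot⟩ := stmt_17_general τ b α (mod_cast hb.ne') σ hσ
  refine ⟨C, Λ, hC, by linarith, fun lam hlam => (hroot lam hlam).imp fun s ⟨hs, hle⟩ => ⟨?_, ?_⟩⟩
  · rw [hP lam (by linarith), ← hs.eq_zero, eval_modalPoly]
    simp [mgtPoly]
  · push_cast
    exact hle.trans (by gcongr <;> linarith)
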